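/- arXiv:2501.17016 — 2 statements merged into one kernel-verified Lean document; each statement's English description precedes it below -/
import Mathlib

section
/- Let Γ_∞ ⊆ ℝⁿ be an open convex cone, invariant under permutations of the coordinates, containing the open positive orthant Γₙ := {λ : λᵢ > 0 for all i}, and satisfying Σ_{k≠i} λ_k > 0 for every λ ∈ Γ_∞ and every i. Let F : Γ_∞ → ℝ be concave, invariant under permutations of the coordinates, monotone nondecreasing in each variable, strictly positive, and such that F(Rλ) → +∞ as R → +∞ for every λ ∈ Γ_∞. Then for every ε ∈ (0, 1/2) there exists a function g : Γ_∞ → ℝ such that: (1) g is C^∞ on Γ_∞ and invariant under permutations of the coordinates; (2) (1−ε)·F(λ) ≤ g(λ) ≤ F(λ) + (π/2)·ε for all λ ∈ Γ_∞; (3) g is concave, ∂g/∂λᵢ > 0 on Γ_∞ for every i, and g(Rλ) → +∞ as R → +∞ for every λ ∈ Γ_∞. -/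
/-!
For `x ∈ S` let `δ(x)` be comparable with how far `x` can be moved along `-(1, …, 1)` inside `S`,
and replace `F x` by the average of `F` over the box `x + ε δ(x) [1/2, 1]ⁿ`. Monotonicity bounds
the average below by `F x`. Since the segment through `x` extends by `δ(x)` backwards, concavity
and positivity bound it above by `(1 + ε) F x`. The average is jointly concave in the point and the
scale and nondecreasing in the scale, so it stays concave along a concave scale `δ`.

A smooth such `δ` is, up to a factor, the root `t` of "the average of the depth over
`x - t [1/2, 1]ⁿ` vanishes": away from scale zero the averages are smooth, and their derivative in
`t` is at most `-1/2`, so the implicit function theorem applies.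

Strict monotonicity comes from adding a small multiple of `1 - exp (-∑ xᵢ)`, which takes values in
`[0, 1]` on `S`.
-/

open MeasureTheory Filter Topology Set
open scoped ContDiff Convolution

namespace ConcaveRegularization

section General

lemma contDiffAt_of_eventually_apply_eq {𝕜 E F G : Type*} [RCLike 𝕜]
    [NormedAddCommGroup E] [NormedSpace 𝕜 E] [CompleteSpace E]
    [NormedAddCommGroup F] [NormedSpace 𝕜 F] [CompleteSpace F]
    [NormedAddCommGroup G] [NormedSpace 𝕜 G] [CompleteSpace G]
    {n : ℕ∞ω} {Φ : E × F → G} {δ : E → F} {x : E}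
    (hΦ : ContDiffAt 𝕜 n Φ (x, δ x)) (hn : n ≠ 0)
    (hinv : (fderiv 𝕜 Φ (x, δ x) ∘L .inr 𝕜 E F).IsInvertible) (hδ : ContinuousAt δ x)
    (hlevel : ∀ᶠ y in 𝓝 x, Φ (y, δ y) = Φ (x, δ x)) :
    ContDiffAt 𝕜 n δ x := by
  refine (hΦ.contDiffAt_implicitFunction hn hinv).congr_of_eventuallyEq ?_
  have hgraph : Tendsto (fun y => (y, δ y)) (𝓝 x) (𝓝 (x, δ x)) := continuousAt_id.prodMk hδ
  filter_upwards [hlevel, hgraph.eventually (hΦ.eventually_apply_eq_iff_implicitFunction hn hinv)]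
    with y hy hiff
  exact (hiff.1 hy).symm

lemma isInvertible_of_apply_one_ne_zero {𝕜 : Type*} [NontriviallyNormedField 𝕜]
    {L : 𝕜 →L[𝕜] 𝕜} (hL : L 1 ≠ 0) : L.IsInvertible :=
  ⟨ContinuousLinearEquiv.unitsEquivAut 𝕜 (Units.mk0 (L 1) hL), by ext; simp⟩

lemma fderiv_nonneg_of_monotoneOn {E : Type*} [NormedAddCommGroup E] [NormedSpace ℝ E]
    [PartialOrder E] [IsOrderedAddMonoid E] [IsOrderedModule ℝ E] {S : Set E} {G : E → ℝ}
    (hS : IsOpen S) (hG : MonotoneOn G S) {x v : E} (hx : x ∈ S) (hv : 0 ≤ v) :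
    0 ≤ fderiv ℝ G x v := by
  by_cases hd : DifferentiableAt ℝ G x
  · have hline : MonotoneOn (fun t : ℝ => G (x + t • v)) {t | x + t • v ∈ S} :=
      fun s hs t ht hst => hG hs ht (by gcongr)
    have hnhds : {t : ℝ | x + t • v ∈ S} ∈ 𝓝 0 :=
      (hS.preimage (f := fun t : ℝ => x + t • v) (by fun_prop)).mem_nhds (by simpa using hx)
    have h := hline.derivWithin_nonneg (x := 0)
    rw [derivWithin_of_mem_nhds hnhds] at h
    rwa [← hd.lineDeriv_eq_fderiv]
  · simp [fderiv_zero_of_not_differentiableAt hd]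

lemma apply_le_one_add_mul_of_concaveOn {E : Type*} [AddCommGroup E] [Module ℝ E] {S : Set E}
    {F : E → ℝ} (hF : ConcaveOn ℝ S F) {ε : ℝ} (hε : 0 < ε) {x v : E} (hadd : x + ε • v ∈ S)
    (hsub : x - v ∈ S) (hpos : 0 ≤ F (x - v)) : F (x + ε • v) ≤ (1 + ε) * F x := by
  have hcomb : (1 / (1 + ε)) • (x + ε • v) + (ε / (1 + ε)) • (x - v) = x := by
    match_scalars <;> field_simp
    ring
  have hconc := hF.2 hadd hsub (by positivity : 0 ≤ 1 / (1 + ε))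
    (by positivity : 0 ≤ ε / (1 + ε)) (by field_simp)
  rw [hcomb, smul_eq_mul, smul_eq_mul] at hconc
  have hrest : 0 ≤ ε / (1 + ε) * F (x - v) := by positivity
  rw [← inv_mul_le_iff₀ (by positivity), ← one_div]
  linarith

lemma exists_pos_sub_smul_mem {E : Type*} [AddCommGroup E] [TopologicalSpace E]
    [IsTopologicalAddGroup E] [Module ℝ E] [ContinuousSMul ℝ E] {S : Set E} (hS : IsOpen S)
    {x : E} (hx : x ∈ S) (v : E) : ∃ t : ℝ, 0 < t ∧ x - t • v ∈ S := by
  have hcont : Continuous fun t : ℝ => x - t • v := by fun_prop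
  have hnear : ∀ᶠ t : ℝ in 𝓝[>] 0, x - t • v ∈ S :=
    hcont.continuousWithinAt.eventually (hS.mem_nhds (by simpa))
  exact (hnear.and self_mem_nhdsWithin).exists.imp fun _ => And.symm

lemma continuousOn_comp_add_smul {R E X : Type*} [TopologicalSpace E] [Add E] [ContinuousAdd E]
    [SMul R E] [ContinuousConstSMul R E] [TopologicalSpace X] {S T : Set E} {f : E → X}
    (hf : ContinuousOn f S) {x : E} {t : R} (hmem : ∀ y ∈ T, x + t • y ∈ S) :
    ContinuousOn (fun y => f (x + t • y)) T :=
  hf.comp (by fun_prop) hmem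

lemma locallyIntegrable_indicator_of_monotoneOn {X : Type*} [MetricSpace X]
    [LocallyCompactSpace X] [SemilatticeSup X] [IsOrderBornology X] [MeasurableSpace X]
    [BorelSpace X] {μ : Measure X} [IsFiniteMeasureOnCompacts μ] {S : Set X} {F : X → ℝ}
    (hS : IsUpperSet S) (hmeas : AEStronglyMeasurable (S.indicator F) μ) (hF : MonotoneOn F S)
    (hF0 : ∀ x ∈ S, 0 ≤ F x) : LocallyIntegrable (S.indicator F) μ := by
  rcases S.eq_empty_or_nonempty with rfl | ⟨s, hs⟩
  · simpa using locallyIntegrable_zero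
  refine locallyIntegrable_iff.2 fun K hK => ?_
  obtain ⟨b, hb⟩ := hK.isBounded.bddAbove
  have hsup : s ⊔ b ∈ S := hS le_sup_left hs
  refine IntegrableOn.of_bound hK.measure_lt_top hmeas.restrict (F (s ⊔ b)) <|
    (ae_restrict_iff' hK.measurableSet).2 <| .of_forall fun x hx => ?_
  by_cases hxS : x ∈ S
  · rw [indicator_of_mem hxS, Real.norm_of_nonneg (hF0 x hxS)]
    exact hF hxS hsup ((hb hx).trans le_sup_right)
  · rw [indicator_of_notMem hxS, norm_zero]
    exact hF0 _ hsup

section Dilation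

variable {E : Type*} [NormedAddCommGroup E] [NormedSpace ℝ E] {φ : E → ℝ}

/-- The kernel whose convolution with `f` is the average `∫ y, f (x + t • y) * φ y`. The reflection
`-z` compensates for the sign in `f ⋆ g = ∫ f w * g (x - w)`. -/
noncomputable def reflectedDilation (φ : E → ℝ) (t : ℝ) (z : E) : ℝ :=
  |(t ^ Module.finrank ℝ E)⁻¹| * φ (t⁻¹ • -z)

lemma reflectedDilation_eq_zero {R t : ℝ} (hφ : Function.support φ ⊆ Metric.closedBall 0 R)
    (ht : t ≠ 0) {z : E} (hz : |t| * R < ‖z‖) : reflectedDilation φ t z = 0 := by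
  suffices φ (t⁻¹ • -z) = 0 by rw [reflectedDilation, this, mul_zero]
  by_contra hne
  have hball : ‖t⁻¹ • -z‖ ≤ R := mem_closedBall_zero_iff.1 (hφ hne)
  rw [norm_smul, norm_neg, norm_inv, Real.norm_eq_abs, inv_mul_le_iff₀ (abs_pos.2 ht)] at hball
  exact hz.not_ge hball

lemma contDiffAt_reflectedDilation {n : ℕ∞} (hφ : ContDiff ℝ n φ) {q : ℝ × E} (hq : q.1 ≠ 0) :
    ContDiffAt ℝ n (fun q : ℝ × E => reflectedDilation φ q.1 q.2) q := by
  have hpow : q.1 ^ Module.finrank ℝ E ≠ 0 := pow_ne_zero _ hq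
  exact ((contDiffAt_abs (inv_ne_zero hpow)).comp q ((contDiffAt_fst.pow _).inv hpow)).mul
    (hφ.contDiffAt.comp q ((contDiffAt_fst.inv hq).smul contDiffAt_snd.neg))

end Dilation

section Mollification

variable {E : Type*} [NormedAddCommGroup E] [NormedSpace ℝ E] [FiniteDimensional ℝ E]
  [MeasurableSpace E] [BorelSpace E] (μ : Measure E) [μ.IsAddHaarMeasure]

lemma integral_comp_add_smul_mul_eq_convolution (f φ : E → ℝ) (x : E) {t : ℝ} (ht : t ≠ 0) :
    ∫ y, f (x + t • y) * φ y ∂μ =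
      (f ⋆[ContinuousLinearMap.mul ℝ ℝ, μ] reflectedDilation φ t) x := by
  calc ∫ y, f (x + t • y) * φ y ∂μ
      = ∫ y, (fun z => f (x + z) * φ (t⁻¹ • z)) (t • y) ∂μ := by
        simp only [inv_smul_smul₀ ht]
    _ = |(t ^ Module.finrank ℝ E)⁻¹| * ∫ z, f (x + z) * φ (t⁻¹ • z) ∂μ :=
        Measure.integral_comp_smul μ (fun z => f (x + z) * φ (t⁻¹ • z)) t
    _ = |(t ^ Module.finrank ℝ E)⁻¹| * ∫ w, f w * φ (t⁻¹ • (w - x)) ∂μ := by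
        rw [← integral_add_left_eq_self (fun w => f w * φ (t⁻¹ • (w - x))) x]
        simp only [add_sub_cancel_left]
    _ = _ := by
        rw [← integral_const_mul]
        simp only [convolution, reflectedDilation, ContinuousLinearMap.mul_apply', neg_sub,
          mul_left_comm]

variable {μ}

lemma contDiffOn_integral_comp_add_smul_mul {f φ : E → ℝ} (hf : LocallyIntegrable f μ)
    (hφ : ContDiff ℝ ∞ φ) (hsupp : HasCompactSupport φ) :
    ContDiffOn ℝ ∞ (fun q : E × ℝ => ∫ y, f (q.1 + q.2 • y) * φ y ∂μ) {q | q.2 ≠ 0} := by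
  rintro ⟨x₀, t₀⟩ (ht₀ : t₀ ≠ 0)
  obtain ⟨R, hR₀, hR⟩ := hsupp.isCompact.isBounded.subset_closedBall_lt 0 0
  let I : Set ℝ := Metric.ball t₀ |t₀|
  have hI : ∀ t ∈ I, t ≠ 0 ∧ |t| ≤ 2 * |t₀| := by
    intro t (ht : |t - t₀| < |t₀|)
    refine ⟨?_, by linarith [abs_sub_abs_le_abs_sub t t₀]⟩
    rintro rfl
    simp at ht
  have hzero : ∀ t z, t ∈ I → z ∉ Metric.closedBall 0 (2 * |t₀| * R) →
      reflectedDilation φ t z = 0 := by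
    intro t z ht hz
    refine reflectedDilation_eq_zero ((subset_tsupport φ).trans hR) (hI t ht).1 ?_
    rw [mem_closedBall_zero_iff, not_le] at hz
    exact (mul_le_mul_of_nonneg_right (hI t ht).2 hR₀.le).trans_lt hz
  have hsmooth : ContDiffOn ℝ ∞ (fun q : ℝ × E => reflectedDilation φ q.1 q.2) (I ×ˢ univ) :=
    fun q hq => (contDiffAt_reflectedDilation hφ (hI q.1 hq.1).1).contDiffWithinAt
  have hconv := contDiffOn_convolution_right_with_param (ContinuousLinearMap.mul ℝ ℝ)
    Metric.isOpen_ball (isCompact_closedBall 0 (2 * |t₀| * R)) hzero hf hsmooth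
  have hnhds : I ×ˢ univ ∈ 𝓝 (t₀, x₀) :=
    (Metric.isOpen_ball.prod isOpen_univ).mem_nhds ⟨by simpa [I] using ht₀, mem_univ _⟩
  have hswap := (hconv.contDiffAt hnhds).comp (x₀, t₀)
    (f := fun q : E × ℝ => (q.2, q.1)) (contDiffAt_snd.prodMk contDiffAt_fst)
  refine (hswap.congr_of_eventuallyEq ?_).contDiffWithinAt
  filter_upwards [continuousAt_snd.eventually_ne ht₀] with q hq
  exact integral_comp_add_smul_mul_eq_convolution μ f φ q.1 hq

end Mollification

end General

section BoxAverage

variable {ι : Type*} [Fintype ι]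

/-- The smooth permutation-invariant probability density, supported in the box `[1/2, 1]^ι`,
against which functions are averaged below. -/
noncomputable def boxKernel (ι : Type*) [Fintype ι] (y : ι → ℝ) : ℝ :=
  ∏ i, (⟨1 / 8, 1 / 4, by norm_num, by norm_num⟩ : ContDiffBump (3 / 4 : ℝ)).normed volume (y i)

lemma contDiff_boxKernel : ContDiff ℝ ∞ (boxKernel ι) :=
  contDiff_prod fun i _ => (ContDiffBump.contDiff_normed _).comp (contDiff_apply ℝ ℝ i)

lemma boxKernel_nonneg (y : ι → ℝ) : 0 ≤ boxKernel ι y :=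
  Finset.prod_nonneg fun _ _ => ContDiffBump.nonneg_normed _ _

lemma integral_boxKernel : ∫ y, boxKernel ι y = 1 := by
  simp only [boxKernel, integral_fintype_prod_volume_eq_prod, ContDiffBump.integral_normed,
    Finset.prod_const_one]

lemma support_boxKernel_subset : Function.support (boxKernel ι) ⊆ Icc (1 / 2) 1 := by
  intro y hy
  have hcoord : ∀ i, y i ∈ Metric.ball (3 / 4 : ℝ) (1 / 4) := fun i => by
    have h := Finset.prod_ne_zero_iff.1 hy i (Finset.mem_univ i)
    rwa [← Function.mem_support, ContDiffBump.support_normed_eq] at h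
  simp only [Real.ball_eq_Ioo, mem_Ioo] at hcoord
  refine ⟨fun i => ?_, fun i => ?_⟩
  · simpa using show (1 / 2 : ℝ) ≤ y i by linarith [(hcoord i).1]
  · simpa using show y i ≤ (1 : ℝ) by linarith [(hcoord i).2]

lemma boxKernel_comp_perm (σ : Equiv.Perm ι) (y : ι → ℝ) : boxKernel ι (y ∘ σ) = boxKernel ι y :=
  Equiv.prod_comp σ fun i => ContDiffBump.normed _ volume (y i)

lemma hasCompactSupport_boxKernel : HasCompactSupport (boxKernel ι) :=
  HasCompactSupport.of_support_subset_isCompact isCompact_Icc support_boxKernel_subset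

lemma integrable_boxKernel : Integrable (boxKernel ι) :=
  contDiff_boxKernel.continuous.integrable_of_hasCompactSupport hasCompactSupport_boxKernel

/-- The probability measure on `ℝ^ι` with density `boxKernel`. -/
noncomputable def boxMeasure (ι : Type*) [Fintype ι] : Measure (ι → ℝ) :=
  volume.withDensity fun y => ENNReal.ofReal (boxKernel ι y)

instance : IsProbabilityMeasure (boxMeasure ι) where
  measure_univ := by
    rw [boxMeasure, withDensity_apply _ MeasurableSet.univ, Measure.restrict_univ,
      ← ofReal_integral_eq_lintegral_ofReal integrable_boxKernel (.of_forall boxKernel_nonneg),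
      integral_boxKernel, ENNReal.ofReal_one]

lemma ae_boxMeasure_mem_Icc : ∀ᵐ y ∂boxMeasure ι, y ∈ Icc (1 / 2) 1 := by
  rw [boxMeasure, ae_withDensity_iff contDiff_boxKernel.continuous.measurable.ennreal_ofReal]
  refine .of_forall fun y hy => support_boxKernel_subset fun hzero => hy ?_
  rw [hzero, ENNReal.ofReal_zero]

lemma integral_boxMeasure (f : (ι → ℝ) → ℝ) :
    ∫ y, f y ∂boxMeasure ι = ∫ y, f y * boxKernel ι y := by
  rw [boxMeasure, integral_withDensity_eq_integral_toReal_smul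
    contDiff_boxKernel.continuous.measurable.ennreal_ofReal (by simp)]
  simp only [ENNReal.toReal_ofReal (boxKernel_nonneg _), smul_eq_mul, mul_comm]

lemma integral_boxMeasure_comp_perm (σ : Equiv.Perm ι) (f : (ι → ℝ) → ℝ) :
    ∫ y, f (y ∘ σ) ∂boxMeasure ι = ∫ y, f y ∂boxMeasure ι := by
  have hσ : ∀ y : ι → ℝ, MeasurableEquiv.piCongrLeft (fun _ => ℝ) σ.symm y = y ∘ σ := fun y => by
    ext i
    simpa using
      MeasurableEquiv.piCongrLeft_apply_apply (β := fun _ : ι => ℝ) σ.symm y (σ i)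
  have h := (volume_measurePreserving_piCongrLeft (fun _ => ℝ) σ.symm).integral_comp'
    (fun y => f y * boxKernel ι y)
  simpa only [hσ, boxKernel_comp_perm, ← integral_boxMeasure] using h

lemma integrable_boxMeasure {f : (ι → ℝ) → ℝ}
    (hf : ContinuousOn f (Icc (1 / 2) 1)) : Integrable f (boxMeasure ι) := by
  have hon : IntegrableOn f (Icc (1 / 2) 1) (boxMeasure ι) := hf.integrableOn_compact isCompact_Icc
  rwa [IntegrableOn, Measure.restrict_eq_self_of_ae_mem ae_boxMeasure_mem_Icc] at hon

lemma integral_boxMeasure_mono {f g : (ι → ℝ) → ℝ} (hf : ContinuousOn f (Icc (1 / 2) 1))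
    (hg : ContinuousOn g (Icc (1 / 2) 1)) (hfg : ∀ y ∈ Icc (1 / 2) 1, f y ≤ g y) :
    ∫ y, f y ∂boxMeasure ι ≤ ∫ y, g y ∂boxMeasure ι :=
  integral_mono_ae (integrable_boxMeasure hf) (integrable_boxMeasure hg)
    (ae_boxMeasure_mem_Icc.mono hfg)

/-- The average of `f` over the box `x + t • [1/2, 1]^ι`, weighted by `boxMeasure`. -/
noncomputable def boxAverage (f : (ι → ℝ) → ℝ) (x : ι → ℝ) (t : ℝ) : ℝ :=
  ∫ y, f (x + t • y) ∂boxMeasure ι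

lemma boxAverage_zero_right (f : (ι → ℝ) → ℝ) (x : ι → ℝ) : boxAverage f x 0 = f x := by
  simp [boxAverage]

lemma boxAverage_comp_perm {f : (ι → ℝ) → ℝ} {x : ι → ℝ} {t : ℝ} (σ : Equiv.Perm ι)
    (hf : ∀ y ∈ Icc (1 / 2) 1, f ((x + t • y) ∘ σ) = f (x + t • y)) :
    boxAverage f (x ∘ σ) t = boxAverage f x t := by
  rw [boxAverage, ← integral_boxMeasure_comp_perm σ]
  exact integral_congr_ae (ae_boxMeasure_mem_Icc.mono hf)

lemma contDiffOn_boxAverage {f : (ι → ℝ) → ℝ} (hf : LocallyIntegrable f) :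
    ContDiffOn ℝ ∞ (fun q : (ι → ℝ) × ℝ => boxAverage f q.1 q.2) {q | q.2 ≠ 0} := by
  simp only [boxAverage, integral_boxMeasure]
  exact contDiffOn_integral_comp_add_smul_mul hf contDiff_boxKernel hasCompactSupport_boxKernel

variable {S : Set (ι → ℝ)}

lemma boxAverage_le_boxAverage {f : (ι → ℝ) → ℝ} (hf : ContinuousOn f S) {x x' : ι → ℝ} {t t' : ℝ}
    (hmem : ∀ y ∈ Icc (1 / 2) 1, x + t • y ∈ S) (hmem' : ∀ y ∈ Icc (1 / 2) 1, x' + t' • y ∈ S)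
    (hle : ∀ y ∈ Icc (1 / 2) 1, f (x + t • y) ≤ f (x' + t' • y)) :
    boxAverage f x t ≤ boxAverage f x' t' :=
  integral_boxMeasure_mono (continuousOn_comp_add_smul hf hmem)
    (continuousOn_comp_add_smul hf hmem') hle

lemma boxAverage_mem_Icc {f : (ι → ℝ) → ℝ} (hf : ContinuousOn f S) {x : ι → ℝ} {t a b : ℝ}
    (hmem : ∀ y ∈ Icc (1 / 2) 1, x + t • y ∈ S)
    (hab : ∀ y ∈ Icc (1 / 2) 1, f (x + t • y) ∈ Icc a b) : boxAverage f x t ∈ Icc a b := by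
  have hcont := continuousOn_comp_add_smul hf hmem
  constructor
  · simpa [boxAverage] using integral_boxMeasure_mono continuousOn_const hcont
      fun y hy => (hab y hy).1
  · simpa [boxAverage] using integral_boxMeasure_mono hcont continuousOn_const
      fun y hy => (hab y hy).2

lemma concaveOn_boxAverage (hS : IsOpen S) {f : (ι → ℝ) → ℝ} (hf : ConcaveOn ℝ S f) :
    ConcaveOn ℝ {q : (ι → ℝ) × ℝ | ∀ y ∈ Icc (1 / 2) 1, q.1 + q.2 • y ∈ S}
      (fun q => boxAverage f q.1 q.2) := by
  have hcomb : ∀ (p q : (ι → ℝ) × ℝ) (a b : ℝ) (y : ι → ℝ), (a • p + b • q).1 +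
      (a • p + b • q).2 • y = a • (p.1 + p.2 • y) + b • (q.1 + q.2 • y) := by
    intro p q a b y
    simp only [Prod.fst_add, Prod.snd_add, Prod.smul_fst, Prod.smul_snd, smul_eq_mul]
    module
  have hconvex : Convex ℝ {q : (ι → ℝ) × ℝ | ∀ y ∈ Icc (1 / 2) 1, q.1 + q.2 • y ∈ S} := by
    intro p hp q hq a b ha hb hab y hy
    rw [hcomb]
    exact hf.1 (hp y hy) (hq y hy) ha hb hab
  refine ⟨hconvex, fun p hp q hq a b ha hb hab => ?_⟩
  have hcont {r : (ι → ℝ) × ℝ} (hr : ∀ y ∈ Icc (1 / 2) 1, r.1 + r.2 • y ∈ S) :=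
    continuousOn_comp_add_smul (hf.continuousOn hS) hr
  calc a • boxAverage f p.1 p.2 + b • boxAverage f q.1 q.2
      = ∫ y, a • f (p.1 + p.2 • y) + b • f (q.1 + q.2 • y) ∂boxMeasure ι := by
        simp only [boxAverage, ← integral_smul]
        exact (integral_add ((integrable_boxMeasure (hcont hp)).smul a)
          ((integrable_boxMeasure (hcont hq)).smul b)).symm
    _ ≤ boxAverage f (a • p + b • q).1 (a • p + b • q).2 := by
        refine integral_boxMeasure_mono (((hcont hp).const_smul a).add ((hcont hq).const_smul b))
          (hcont (hconvex hp hq ha hb hab)) fun y hy => ?_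
        rw [hcomb]
        exact hf.2 (hp y hy) (hq y hy) ha hb hab

end BoxAverage

section Depth

variable {ι : Type*} {S : Set (ι → ℝ)}

/-- The depth of `x` inside an upper set `S`: how far `x` can be moved in the direction
`-(1, …, 1)` without leaving `S`. It is negative if `x` is outside the closure of `S`. -/
noncomputable def depth (S : Set (ι → ℝ)) (x : ι → ℝ) : ℝ :=
  sSup {t | x - t • 1 ∈ S}

lemma depth_comp_perm (hperm : ∀ x ∈ S, ∀ σ : Equiv.Perm ι, x ∘ σ ∈ S) (σ : Equiv.Perm ι)
    (x : ι → ℝ) : depth S (x ∘ σ) = depth S x := by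
  have hmem (y : ι → ℝ) : y ∘ σ ∈ S ↔ y ∈ S :=
    ⟨fun h => by simpa [Function.comp_assoc] using hperm _ h σ⁻¹, fun h => hperm y h σ⟩
  simp only [depth, ← hmem (x - _ • 1)]
  rfl

variable [Finite ι]

lemma exists_le_add_smul_one (x z : ι → ℝ) : ∃ c : ℝ, x ≤ z + c • 1 := by
  obtain ⟨c, hc⟩ := Set.finite_range (x - z) |>.bddAbove
  refine ⟨c, fun i => ?_⟩
  simpa [add_comm c] using hc (mem_range_self i)

variable (hup : IsUpperSet S) (hne : S.Nonempty) (huniv : S ≠ univ)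
include hup hne huniv

lemma isLUB_depth (x : ι → ℝ) : IsLUB {t | x - t • 1 ∈ S} (depth S x) := by
  refine isLUB_csSup ?_ ?_
  · obtain ⟨s, hs⟩ := hne
    obtain ⟨c, hc⟩ := exists_le_add_smul_one s x
    exact ⟨-c, by simpa only [mem_ofPred_eq, neg_smul, sub_neg_eq_add] using hup hc hs⟩
  · obtain ⟨z, hz⟩ := (ne_univ_iff_exists_notMem S).1 huniv
    obtain ⟨c, hc⟩ := exists_le_add_smul_one x z
    refine ⟨c, fun t ht => ?_⟩
    by_contra! hlt
    refine hz (hup (sub_le_iff_le_add.2 (hc.trans ?_)) ht)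
    exact add_le_add_right (smul_le_smul_of_nonneg_right hlt.le zero_le_one) z

lemma le_depth {x : ι → ℝ} {t : ℝ} (h : x - t • 1 ∈ S) : t ≤ depth S x :=
  (isLUB_depth hup hne huniv x).1 h

lemma sub_smul_one_mem_of_lt_depth {x : ι → ℝ} {t : ℝ} (ht : t < depth S x) : x - t • 1 ∈ S := by
  obtain ⟨s, hs, hts⟩ := (lt_isLUB_iff (isLUB_depth hup hne huniv x)).1 ht
  exact hup (sub_le_sub_left (smul_le_smul_of_nonneg_right hts.le zero_le_one) x) hs

lemma depth_mono : Monotone (depth S) := fun x _ hxy =>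
  le_of_forall_lt fun _ ht => by
    obtain ⟨s, hts, hs⟩ := exists_between ht
    exact hts.trans_le <| le_depth hup hne huniv <| hup (sub_le_sub_right hxy _) <|
      sub_smul_one_mem_of_lt_depth hup hne huniv hs

lemma depth_add_smul_one (x : ι → ℝ) (c : ℝ) : depth S (x + c • 1) = depth S x + c := by
  have himage : {t : ℝ | x + c • 1 - t • 1 ∈ S} =
      OrderIso.addRight c '' {t : ℝ | x - t • 1 ∈ S} := by
    ext t
    have hshift : x + c • 1 - t • 1 = x - (t - c) • 1 := by module
    simp [hshift, ← sub_eq_add_neg]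
  rw [depth, himage]
  exact ((OrderIso.addRight c).isLUB_image'.2 (isLUB_depth hup hne huniv x)).csSup_eq
    ((isLUB_depth hup hne huniv x).nonempty.image _)

lemma depth_pos (hopen : IsOpen S) {x : ι → ℝ} (hx : x ∈ S) : 0 < depth S x := by
  obtain ⟨t, htpos, ht⟩ := exists_pos_sub_smul_mem hopen hx 1
  exact htpos.trans_le (le_depth hup hne huniv ht)

lemma concaveOn_depth (hconv : Convex ℝ S) : ConcaveOn ℝ univ (depth S) := by
  refine ⟨convex_univ, fun x _ y _ a b ha hb hab => ?_⟩
  refine le_of_forall_pos_sub_le fun e he => le_depth hup hne huniv ?_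
  have hx := sub_smul_one_mem_of_lt_depth hup hne huniv (sub_lt_self (depth S x) he)
  have hy := sub_smul_one_mem_of_lt_depth hup hne huniv (sub_lt_self (depth S y) he)
  convert hconv hx hy ha hb hab using 1
  rw [show b = 1 - a by linarith]
  simp only [smul_eq_mul]
  module

end Depth

section AverageRoot

variable {ι : Type*} {d : (ι → ℝ) → ℝ}

lemma continuous_of_monotone_of_add_smul_one [Finite ι] (hmono : Monotone d)
    (hadd : ∀ x (c : ℝ), d (x + c • 1) = d x + c) : Continuous d := by
  cases nonempty_fintype ι
  refine (LipschitzWith.of_le_add fun x z => ?_).continuous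
  rw [← hadd]
  refine hmono fun i => ?_
  have h := (le_abs_self _).trans (norm_le_pi_norm (x - z) i)
  simpa [dist_eq_norm, sub_le_iff_le_add, add_comm (z i)] using h

variable [Fintype ι]

/-- The solution `t` of `boxAverage d x (-t) = 0`. For `d` monotone and with unit slope along
`(1, …, 1)`, the average is strictly decreasing in `t` and the solution is unique. -/
noncomputable def averageRoot (d : (ι → ℝ) → ℝ) (x : ι → ℝ) : ℝ :=
  sSup {t | 0 ≤ boxAverage d x (-t)}

lemma averageRoot_comp_perm {σ : Equiv.Perm ι} (hσ : ∀ x, d (x ∘ σ) = d x) (x : ι → ℝ) :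
    averageRoot d (x ∘ σ) = averageRoot d x := by
  simp only [averageRoot, boxAverage_comp_perm σ fun _ _ => hσ _]

variable (hmono : Monotone d) (hadd : ∀ x (c : ℝ), d (x + c • 1) = d x + c)
include hmono hadd

lemma boxAverage_add_smul_one (x : ι → ℝ) (t c : ℝ) :
    boxAverage d (x + c • 1) t = boxAverage d x t + c := by
  have hcont : ContinuousOn (fun y => d (x + t • y)) (Icc (1 / 2) 1) :=
    ((continuous_of_monotone_of_add_smul_one hmono hadd).comp (by fun_prop)).continuousOn
  have h := integral_add (integrable_boxMeasure hcont) (integrable_const c)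
  simpa [boxAverage, ← hadd, add_right_comm] using h

lemma boxAverage_neg_mem_Icc (x : ι → ℝ) {s t : ℝ} (hst : s ≤ t) :
    boxAverage d x (-s) ∈
      Icc (boxAverage d x (-t) + (t - s) / 2) (boxAverage d x (-t) + (t - s)) := by
  have hcont := (continuous_of_monotone_of_add_smul_one hmono hadd).continuousOn (s := univ)
  rw [mem_Icc, ← boxAverage_add_smul_one hmono hadd, ← boxAverage_add_smul_one hmono hadd]
  constructor <;>
    refine boxAverage_le_boxAverage hcont (fun _ _ => mem_univ _) (fun _ _ => mem_univ _)
      fun y hy => hmono fun i => ?_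
  · have h := mul_le_mul_of_nonneg_left (hy.1 i) (sub_nonneg.2 hst)
    simp only [Pi.div_apply, Pi.ofNat_apply, neg_smul, Pi.add_apply, Pi.smul_apply, smul_eq_mul,
      mul_one, Pi.neg_apply] at h ⊢
    linarith
  · have h := mul_le_mul_of_nonneg_left (hy.2 i) (sub_nonneg.2 hst)
    simp only [Pi.one_apply, mul_one, neg_smul, Pi.add_apply, Pi.neg_apply, Pi.smul_apply,
      smul_eq_mul] at h ⊢
    linarith

lemma antitone_boxAverage_neg_add_half (x : ι → ℝ) :
    Antitone fun t => boxAverage d x (-t) + t / 2 := fun s t hst => by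
  linarith [(boxAverage_neg_mem_Icc hmono hadd x hst).1]

lemma strictAnti_boxAverage_neg (x : ι → ℝ) : StrictAnti fun t => boxAverage d x (-t) :=
  fun s t hst => by linarith [(boxAverage_neg_mem_Icc hmono hadd x hst.le).1]

lemma continuous_boxAverage_neg (x : ι → ℝ) : Continuous fun t => boxAverage d x (-t) := by
  refine (LipschitzWith.of_le_add fun s t => ?_).continuous
  rw [Real.dist_eq]
  rcases le_total s t with hst | hts
  · linarith [(boxAverage_neg_mem_Icc hmono hadd x hst).2, neg_le_abs (s - t)]
  · linarith [(strictAnti_boxAverage_neg hmono hadd x).antitone hts, abs_nonneg (s - t)]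

lemma exists_boxAverage_neg_eq_zero (x : ι → ℝ) : ∃ t, boxAverage d x (-t) = 0 := by
  have hivt := intermediate_value_uIcc (a := 0) (b := 2 * d x)
    (continuous_boxAverage_neg hmono hadd x).continuousOn
  suffices (0 : ℝ) ∈ uIcc (boxAverage d x (-0)) (boxAverage d x (-(2 * d x))) from
    (hivt this).imp fun _ ht => ht.2
  rw [mem_uIcc, neg_zero, boxAverage_zero_right]
  rcases le_total 0 (d x) with hx | hx
  · have h := (boxAverage_neg_mem_Icc hmono hadd x (by linarith : 0 ≤ 2 * d x)).1
    rw [neg_zero, boxAverage_zero_right] at h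
    exact .inr ⟨by linarith, by linarith⟩
  · have h := (boxAverage_neg_mem_Icc hmono hadd x (by linarith : 2 * d x ≤ 0)).1
    rw [neg_zero, boxAverage_zero_right] at h
    exact .inl ⟨by linarith, by linarith⟩

lemma boxAverage_neg_averageRoot (x : ι → ℝ) : boxAverage d x (-averageRoot d x) = 0 := by
  obtain ⟨t, ht⟩ := exists_boxAverage_neg_eq_zero hmono hadd x
  have hgreatest : IsGreatest {t | 0 ≤ boxAverage d x (-t)} t :=
    ⟨ht.ge, fun s hs => (strictAnti_boxAverage_neg hmono hadd x).le_iff_ge.1 (ht.trans_le hs)⟩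
  rwa [averageRoot, hgreatest.csSup_eq]

lemma le_averageRoot_iff {x : ι → ℝ} {t : ℝ} :
    t ≤ averageRoot d x ↔ 0 ≤ boxAverage d x (-t) := by
  rw [← (strictAnti_boxAverage_neg hmono hadd x).le_iff_ge,
    boxAverage_neg_averageRoot hmono hadd]

lemma averageRoot_mem_Icc {x : ι → ℝ} (hx : 0 ≤ d x) :
    averageRoot d x ∈ Icc (d x) (2 * d x) := by
  have hroot := boxAverage_neg_averageRoot hmono hadd x
  have hlower := (boxAverage_neg_mem_Icc hmono hadd x hx).2
  rw [neg_zero, boxAverage_zero_right] at hlower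
  have hle : d x ≤ averageRoot d x := (le_averageRoot_iff hmono hadd).2 (by linarith)
  have hupper := (boxAverage_neg_mem_Icc hmono hadd x (hx.trans hle)).1
  rw [neg_zero, boxAverage_zero_right] at hupper
  exact ⟨hle, by linarith⟩

lemma averageRoot_mono : Monotone (averageRoot d) := fun x y hxy => by
  rw [le_averageRoot_iff hmono hadd, ← boxAverage_neg_averageRoot hmono hadd x]
  exact boxAverage_le_boxAverage
    (continuous_of_monotone_of_add_smul_one hmono hadd).continuousOn
    (fun _ _ => mem_univ _) (fun _ _ => mem_univ _) fun z _ => hmono (add_le_add_left hxy _)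

lemma concaveOn_averageRoot (hconc : ConcaveOn ℝ univ d) : ConcaveOn ℝ univ (averageRoot d) := by
  refine ⟨convex_univ, fun x _ y _ a b ha hb hab => ?_⟩
  have h := (concaveOn_boxAverage isOpen_univ hconc).2
    (x := (x, -averageRoot d x)) (y := (y, -averageRoot d y)) (by simp) (by simp) ha hb hab
  rw [le_averageRoot_iff hmono hadd]
  simpa [boxAverage_neg_averageRoot hmono hadd, add_comm] using h

lemma contDiffAt_averageRoot (hconc : ConcaveOn ℝ univ d) {x : ι → ℝ} (hx : d x ≠ 0) :
    ContDiffAt ℝ ∞ (averageRoot d) x := by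
  let Φ : (ι → ℝ) × ℝ → ℝ := fun q => boxAverage d q.1 (-q.2)
  have hroot := boxAverage_neg_averageRoot hmono hadd
  have hne : averageRoot d x ≠ 0 := fun h =>
    hx (by simpa [h, boxAverage_zero_right] using hroot x)
  have hlocal : LocallyIntegrable d :=
    (continuous_of_monotone_of_add_smul_one hmono hadd).locallyIntegrable
  have hΦ : ContDiffAt ℝ ∞ Φ (x, averageRoot d x) :=
    ((contDiffOn_boxAverage hlocal).contDiffAt <|
      (isOpen_ne_fun continuous_snd continuous_const).mem_nhds (neg_ne_zero.2 hne)).comp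
      (f := fun q : (ι → ℝ) × ℝ => (q.1, -q.2)) _ (contDiffAt_fst.prodMk contDiffAt_snd.neg)
  have hderiv : HasDerivAt (fun t => boxAverage d x (-t)) (fderiv ℝ Φ (x, averageRoot d x) (0, 1))
      (averageRoot d x) :=
    (hΦ.differentiableAt (by simp)).hasFDerivAt.comp_hasDerivAt (averageRoot d x)
      ((hasDerivAt_const _ x).prodMk (hasDerivAt_id _))
  have hneg := (hderiv.add ((hasDerivAt_id _).div_const 2)).nonpos_of_antitone
    (antitone_boxAverage_neg_add_half hmono hadd x)
  refine contDiffAt_of_eventually_apply_eq hΦ (by simp) ?_ ?_ (.of_forall fun y => ?_)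
  · refine isInvertible_of_apply_one_ne_zero (ne_of_lt ?_)
    simp only [ContinuousLinearMap.comp_apply, ContinuousLinearMap.inr_apply]
    linarith
  · exact ((concaveOn_averageRoot hmono hadd hconc).continuousOn isOpen_univ).continuousAt univ_mem
  · exact (hroot y).trans (hroot x).symm

end AverageRoot

section VariableScale

variable {ι : Type*} {S : Set (ι → ℝ)} {F ρ : (ι → ℝ) → ℝ}

lemma nonneg_of_mem_Icc_half_one {y : ι → ℝ} (hy : y ∈ Icc (1 / 2) 1) : 0 ≤ y := fun i =>
  (by simp : (0 : ℝ) ≤ (1 / 2 : ι → ℝ) i).trans (hy.1 i)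

lemma add_smul_mem_of_mem_Icc (hup : IsUpperSet S) {x y : ι → ℝ} {t : ℝ} (hx : x ∈ S)
    (ht : 0 ≤ t) (hy : y ∈ Icc (1 / 2) 1) : x + t • y ∈ S :=
  hup (le_add_of_nonneg_right (smul_nonneg ht (nonneg_of_mem_Icc_half_one hy))) hx

variable [Fintype ι]

lemma boxAverage_comp_comp_perm (hup : IsUpperSet S) {σ : Equiv.Perm ι}
    (hF : ∀ x ∈ S, F (x ∘ σ) = F x) {x : ι → ℝ} (hx : x ∈ S) (hρ : ρ (x ∘ σ) = ρ x)
    (hρ0 : 0 ≤ ρ x) : boxAverage F (x ∘ σ) (ρ (x ∘ σ)) = boxAverage F x (ρ x) := by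
  rw [hρ, boxAverage_comp_perm σ fun y hy => hF _ (add_smul_mem_of_mem_Icc hup hx hρ0 hy)]

lemma boxAverage_mono_of_monotoneOn (hup : IsUpperSet S) (hcont : ContinuousOn F S)
    (hmono : MonotoneOn F S) {x x' : ι → ℝ} {t t' : ℝ} (hx : x ∈ S) (hxx' : x ≤ x') (ht : 0 ≤ t)
    (htt' : t ≤ t') : boxAverage F x t ≤ boxAverage F x' t' := by
  have hmem := fun y hy => add_smul_mem_of_mem_Icc (y := y) hup hx ht hy
  have hmem' := fun y hy => add_smul_mem_of_mem_Icc (y := y) hup (hup hxx' hx) (ht.trans htt') hy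
  refine boxAverage_le_boxAverage hcont hmem hmem' fun y hy => hmono (hmem y hy) (hmem' y hy) ?_
  exact add_le_add hxx' (smul_le_smul_of_nonneg_right htt' (nonneg_of_mem_Icc_half_one hy))

lemma monotoneOn_boxAverage_comp (hup : IsUpperSet S) (hcont : ContinuousOn F S)
    (hmono : MonotoneOn F S) (hρ : MonotoneOn ρ S) (hρ0 : ∀ x ∈ S, 0 ≤ ρ x) :
    MonotoneOn (fun x => boxAverage F x (ρ x)) S := fun x hx _ hx' hxx' =>
  boxAverage_mono_of_monotoneOn hup hcont hmono hx hxx' (hρ0 x hx) (hρ hx hx' hxx')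

lemma concaveOn_boxAverage_comp (hopen : IsOpen S) (hup : IsUpperSet S) (hconc : ConcaveOn ℝ S F)
    (hmono : MonotoneOn F S) (hρ : ConcaveOn ℝ S ρ) (hρ0 : ∀ x ∈ S, 0 ≤ ρ x) :
    ConcaveOn ℝ S (fun x => boxAverage F x (ρ x)) := by
  refine ⟨hconc.1, fun x hx y hy a b ha hb hab => ?_⟩
  have hmem {z : ι → ℝ} (hz : z ∈ S) := fun w hw =>
    add_smul_mem_of_mem_Icc (y := w) hup hz (hρ0 z hz) hw
  calc a • boxAverage F x (ρ x) + b • boxAverage F y (ρ y)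
      ≤ boxAverage F (a • x + b • y) (a • ρ x + b • ρ y) :=
        (concaveOn_boxAverage hopen hconc).2 (x := (x, ρ x)) (y := (y, ρ y))
          (hmem hx) (hmem hy) ha hb hab
    _ ≤ boxAverage F (a • x + b • y) (ρ (a • x + b • y)) :=
        boxAverage_mono_of_monotoneOn hup (hconc.continuousOn hopen) hmono
          (hconc.1 hx hy ha hb hab) le_rfl
          (add_nonneg (smul_nonneg ha (hρ0 x hx)) (smul_nonneg hb (hρ0 y hy)))
          (hρ.2 hx hy ha hb hab)

lemma contDiffOn_boxAverage_comp (hopen : IsOpen S) (hup : IsUpperSet S)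
    (hcont : ContinuousOn F S) (hmono : MonotoneOn F S) (hF0 : ∀ x ∈ S, 0 ≤ F x)
    (hρ : ContDiffOn ℝ ∞ ρ S) (hρ0 : ∀ x ∈ S, 0 < ρ x) :
    ContDiffOn ℝ ∞ (fun x => boxAverage F x (ρ x)) S := by
  have hlocal : LocallyIntegrable (S.indicator F) :=
    locallyIntegrable_indicator_of_monotoneOn hup ((aestronglyMeasurable_indicator_iff
      hopen.measurableSet).2 (hcont.aestronglyMeasurable hopen.measurableSet)) hmono hF0
  refine ((contDiffOn_boxAverage hlocal).comp (contDiffOn_id.prodMk hρ)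
    fun x hx => (hρ0 x hx).ne').congr fun x hx => ?_
  refine integral_congr_ae (ae_boxMeasure_mem_Icc.mono fun y hy => ?_)
  exact (indicator_of_mem (add_smul_mem_of_mem_Icc hup hx (hρ0 x hx).le hy) F).symm

lemma le_boxAverage (hup : IsUpperSet S) (hcont : ContinuousOn F S) (hmono : MonotoneOn F S)
    {x : ι → ℝ} {t : ℝ} (hx : x ∈ S) (ht : 0 ≤ t) : F x ≤ boxAverage F x t := by
  simpa only [boxAverage_zero_right] using
    boxAverage_mono_of_monotoneOn hup hcont hmono hx le_rfl le_rfl ht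

lemma boxAverage_le_one_add_mul (hopen : IsOpen S) (hup : IsUpperSet S)
    (hconc : ConcaveOn ℝ S F) (hmono : MonotoneOn F S) (hF0 : ∀ x ∈ S, 0 ≤ F x) {ε r : ℝ}
    (hε : 0 < ε) (hr : 0 ≤ r) {x : ι → ℝ} (hx : x ∈ S) (hsub : x - r • 1 ∈ S) :
    boxAverage F x (ε * r) ≤ (1 + ε) * F x := by
  have hmem := fun y hy => add_smul_mem_of_mem_Icc (y := y) hup hx (by positivity : 0 ≤ ε * r) hy
  have hone : x + ε • r • (1 : ι → ℝ) ∈ S :=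
    hup (le_add_of_nonneg_right (smul_nonneg hε.le (smul_nonneg hr zero_le_one))) hx
  refine (boxAverage_mem_Icc (hconc.continuousOn hopen) hmem fun y hy => ⟨hF0 _ (hmem y hy), ?_⟩).2
  calc F (x + (ε * r) • y)
      ≤ F (x + ε • r • 1) := hmono (hmem y hy) hone <| by
        rw [mul_smul]
        have := hy.2
        gcongr
    _ ≤ (1 + ε) * F x := apply_le_one_add_mul_of_concaveOn hconc hε hone hsub (hF0 _ hsub)

end VariableScale

section SmoothDepth

variable {ι : Type*} [Fintype ι] {S : Set (ι → ℝ)}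

/-- A smooth, concave substitute for `depth S` on an open convex upper set `S`. The factor `1 / 4`
makes it smaller than `depth S`. -/
noncomputable def smoothDepth (S : Set (ι → ℝ)) (x : ι → ℝ) : ℝ :=
  averageRoot (depth S) x / 4

lemma smoothDepth_comp_perm (hperm : ∀ x ∈ S, ∀ σ : Equiv.Perm ι, x ∘ σ ∈ S)
    (σ : Equiv.Perm ι) (x : ι → ℝ) : smoothDepth S (x ∘ σ) = smoothDepth S x := by
  rw [smoothDepth, averageRoot_comp_perm (depth_comp_perm hperm σ), smoothDepth]

variable (hup : IsUpperSet S) (hne : S.Nonempty) (huniv : S ≠ univ)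
include hup hne huniv

lemma smoothDepth_mono : Monotone (smoothDepth S) := fun _ _ hxy =>
  div_le_div_of_nonneg_right (averageRoot_mono (depth_mono hup hne huniv)
    (depth_add_smul_one hup hne huniv) hxy) (by norm_num)

lemma concaveOn_smoothDepth (hconv : Convex ℝ S) : ConcaveOn ℝ univ (smoothDepth S) :=
  ((concaveOn_averageRoot (depth_mono hup hne huniv) (depth_add_smul_one hup hne huniv)
    (concaveOn_depth hup hne huniv hconv)).smul (c := 1 / 4) (by norm_num)).congr
    fun x _ => by simp only [smoothDepth, smul_eq_mul, one_div_mul_eq_div]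

lemma contDiffOn_smoothDepth (hopen : IsOpen S) (hconv : Convex ℝ S) :
    ContDiffOn ℝ ∞ (smoothDepth S) S := fun _ hx =>
  ((contDiffAt_averageRoot (depth_mono hup hne huniv) (depth_add_smul_one hup hne huniv)
    (concaveOn_depth hup hne huniv hconv)
    (depth_pos hup hne huniv hopen hx).ne').div_const 4).contDiffWithinAt

lemma smoothDepth_mem_Ioo (hopen : IsOpen S) {x : ι → ℝ} (hx : x ∈ S) :
    smoothDepth S x ∈ Ioo 0 (depth S x) := by
  have hpos := depth_pos hup hne huniv hopen hx
  have hroot := averageRoot_mem_Icc (depth_mono hup hne huniv) (depth_add_smul_one hup hne huniv)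
    hpos.le
  rw [smoothDepth]
  constructor <;> linarith [hroot.1, hroot.2]

end SmoothDepth

section Approximation

variable {ι : Type*} [Fintype ι] {S : Set (ι → ℝ)}

theorem exists_contDiffOn_concaveOn_monotoneOn_between (hopen : IsOpen S) (hup : IsUpperSet S)
    (huniv : S ≠ univ) (hperm : ∀ x ∈ S, ∀ σ : Equiv.Perm ι, x ∘ σ ∈ S) {F : (ι → ℝ) → ℝ}
    (hconc : ConcaveOn ℝ S F) (hFperm : ∀ x ∈ S, ∀ σ : Equiv.Perm ι, F (x ∘ σ) = F x)
    (hmono : MonotoneOn F S) (hF0 : ∀ x ∈ S, 0 ≤ F x) {ε : ℝ} (hε : 0 < ε) :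
    ∃ G : (ι → ℝ) → ℝ, ContDiffOn ℝ ∞ G S ∧
      (∀ x ∈ S, ∀ σ : Equiv.Perm ι, G (x ∘ σ) = G x) ∧
      (∀ x ∈ S, F x ≤ G x ∧ G x ≤ (1 + ε) * F x) ∧ ConcaveOn ℝ S G ∧ MonotoneOn G S := by
  rcases S.eq_empty_or_nonempty with rfl | hne
  · exact ⟨F, by simp [contDiffOn_empty, hconc, hmono]⟩
  have hdepth {x} (hx : x ∈ S) := smoothDepth_mem_Ioo hup hne huniv hopen hx
  have hsub {x} (hx : x ∈ S) : x - smoothDepth S x • 1 ∈ S :=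
    sub_smul_one_mem_of_lt_depth hup hne huniv (hdepth hx).2
  have hcont := hconc.continuousOn hopen
  let ρ : (ι → ℝ) → ℝ := fun x => ε * smoothDepth S x
  have hρ {x} (hx : x ∈ S) : 0 < ρ x := mul_pos hε (hdepth hx).1
  have hρsmooth : ContDiffOn ℝ ∞ ρ S :=
    contDiffOn_const.mul (contDiffOn_smoothDepth hup hne huniv hopen hconc.1)
  have hρperm (σ : Equiv.Perm ι) (x : ι → ℝ) : ρ (x ∘ σ) = ρ x := by
    simp only [ρ, smoothDepth_comp_perm hperm]
  have hρmono : MonotoneOn ρ S := ((smoothDepth_mono hup hne huniv).const_mul hε.le).monotoneOn S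
  have hρconc : ConcaveOn ℝ S ρ :=
    ((concaveOn_smoothDepth hup hne huniv hconc.1).smul hε.le).subset (subset_univ S) hconc.1
  exact ⟨fun x => boxAverage F x (ρ x),
    contDiffOn_boxAverage_comp hopen hup hcont hmono hF0 hρsmooth fun _ => hρ,
    fun x hx σ => boxAverage_comp_comp_perm hup (hFperm · · σ) hx (hρperm σ x) (hρ hx).le,
    fun x hx => ⟨le_boxAverage hup hcont hmono hx (hρ hx).le,
      boxAverage_le_one_add_mul hopen hup hconc hmono hF0 hε (hdepth hx).1.le hx (hsub hx)⟩,
    concaveOn_boxAverage_comp hopen hup hconc hmono hρconc fun _ hx => (hρ hx).le,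
    monotoneOn_boxAverage_comp hup hcont hmono hρmono fun _ hx => (hρ hx).le⟩

end Approximation

section SaturatedSum

variable {ι : Type*} [Fintype ι]

/-- A smooth concave symmetric function, bounded where `0 ≤ ∑ i, x i` and strictly increasing in
each coordinate; adding a small multiple of it makes a nondecreasing function strictly increasing.
-/
noncomputable def saturatedSum (x : ι → ℝ) : ℝ :=
  1 - Real.exp (-∑ i, x i)

lemma contDiff_saturatedSum : ContDiff ℝ ∞ (saturatedSum : (ι → ℝ) → ℝ) := by
  unfold saturatedSum
  fun_prop

lemma saturatedSum_comp_perm (σ : Equiv.Perm ι) (x : ι → ℝ) :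
    saturatedSum (x ∘ σ) = saturatedSum x := by
  simp only [saturatedSum, Function.comp_apply, Equiv.sum_comp σ x]

lemma concaveOn_saturatedSum : ConcaveOn ℝ univ (saturatedSum : (ι → ℝ) → ℝ) :=
  (concaveOn_const 1 convex_univ).sub
    (convexOn_exp.comp_linearMap (-∑ i, LinearMap.proj i : (ι → ℝ) →ₗ[ℝ] ℝ)) |>.congr
      fun x _ => by simp [saturatedSum]

lemma saturatedSum_mem_Icc {x : ι → ℝ} (hx : 0 ≤ ∑ i, x i) : saturatedSum x ∈ Icc 0 1 :=
  ⟨sub_nonneg.2 (Real.exp_le_one_iff.2 (neg_nonpos.2 hx)), sub_le_self _ (Real.exp_nonneg _)⟩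

lemma fderiv_saturatedSum_single [DecidableEq ι] (x : ι → ℝ) (i : ι) :
    fderiv ℝ saturatedSum x (Pi.single i 1) = Real.exp (-∑ j, x j) := by
  have hsum : HasFDerivAt (fun x : ι → ℝ => ∑ j, x j)
      (∑ j, ContinuousLinearMap.proj (R := ℝ) (φ := fun _ : ι => ℝ) j) x :=
    HasFDerivAt.fun_sum fun j _ => hasFDerivAt_apply j x
  have h : HasFDerivAt saturatedSum _ x := hsum.neg.exp.const_sub 1
  simp [h.fderiv]

end SaturatedSum

section Cone

lemma isUpperSet_of_convex_cone {ι : Type*} {S : Set (ι → ℝ)} (hopen : IsOpen S)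
    (hconv : Convex ℝ S) (hcone : ∀ x ∈ S, ∀ t : ℝ, 0 < t → t • x ∈ S)
    (horthant : {x : ι → ℝ | ∀ i, 0 < x i} ⊆ S) : IsUpperSet S := by
  intro x y hxy hx
  have hadd {u v : ι → ℝ} (hu : u ∈ S) (hv : v ∈ S) : u + v ∈ S := by
    have hmid := hcone _ (hconv.midpoint_mem hu hv) 2 two_pos
    rwa [ofNat_smul_eq_nsmul, two_nsmul, midpoint_add_self] at hmid
  obtain ⟨t, htpos, ht⟩ := exists_pos_sub_smul_mem hopen hx 1
  have hpos : y - x + t • 1 ∈ S := horthant fun i => by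
    simpa using add_pos_of_nonneg_of_pos (sub_nonneg.2 (hxy i)) htpos
  simpa using hadd hpos ht

lemma sum_pos_of_forall_sum_erase_pos {ι M : Type*} [Fintype ι] [DecidableEq ι] [Nonempty ι]
    [AddCommGroup M] [LinearOrder M] [IsOrderedAddMonoid M] {x : ι → M}
    (h : ∀ i, 0 < ∑ k ∈ Finset.univ.erase i, x k) : 0 < ∑ k, x k := by
  by_contra! hsum
  have hneg (i : ι) : x i ≤ 0 := by
    rw [← Finset.sum_erase_add _ _ (Finset.mem_univ i)] at hsum
    exact ((lt_add_of_pos_left _ (h i)).trans_le hsum).le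
  obtain ⟨i⟩ := ‹Nonempty ι›
  exact (h i).not_ge (Finset.sum_nonpos fun k _ => hneg k)

lemma ne_zero_of_tendsto_apply_smul_atTop {E : Type*} [Zero E] [SMulZeroClass ℝ E] {F : E → ℝ}
    {x : E} (h : Tendsto (fun R : ℝ => F (R • x)) atTop atTop) : x ≠ 0 := by
  rintro rfl
  simp only [smul_zero] at h
  exact not_tendsto_const_atTop _ _ h

end Cone

end ConcaveRegularization

open ConcaveRegularization

theorem stmt_16_general {ι : Type*} [Fintype ι] [DecidableEq ι] {S : Set (ι → ℝ)}
    (hopen : IsOpen S) (hup : IsUpperSet S)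
    (hperm : ∀ x ∈ S, ∀ σ : Equiv.Perm ι, x ∘ σ ∈ S) (hsum : ∀ x ∈ S, 0 < ∑ i, x i)
    {F : (ι → ℝ) → ℝ} (hFconc : ConcaveOn ℝ S F)
    (hFperm : ∀ x ∈ S, ∀ σ : Equiv.Perm ι, F (x ∘ σ) = F x)
    (hFmono : MonotoneOn F S) (hF0 : ∀ x ∈ S, 0 ≤ F x) {ε : ℝ} (hε : 0 < ε) (hε1 : ε < 1) :
    ∃ g : (ι → ℝ) → ℝ, ContDiffOn ℝ ∞ g S ∧
      (∀ x ∈ S, ∀ σ : Equiv.Perm ι, g (x ∘ σ) = g x) ∧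
      (∀ x ∈ S, (1 - ε) * F x ≤ g x ∧ g x ≤ F x + ε) ∧ ConcaveOn ℝ S g ∧
      (∀ x ∈ S, ∀ i, 0 < fderiv ℝ g x (Pi.single i 1)) ∧
      (∀ x, (∀ᶠ R : ℝ in atTop, R • x ∈ S) → Tendsto (fun R : ℝ => F (R • x)) atTop atTop →
        Tendsto (fun R : ℝ => g (R • x)) atTop atTop) := by
  have huniv : S ≠ univ := fun h => by simpa using hsum 0 (h ▸ mem_univ _)
  have hε0 : 0 < 1 - ε := sub_pos.2 hε1
  obtain ⟨G, hGsmooth, hGperm, hFG, hGconc, hGmono⟩ :=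
    exists_contDiffOn_concaveOn_monotoneOn_between hopen hup huniv hperm hFconc hFperm hFmono
      hF0 hε
  have hbounds (x) (hx : x ∈ S) : (1 - ε) * F x ≤ (1 - ε) * G x + ε * saturatedSum x ∧
      (1 - ε) * G x + ε * saturatedSum x ≤ F x + ε := by
    obtain ⟨hsat0, hsat1⟩ := saturatedSum_mem_Icc (hsum x hx).le
    obtain ⟨hlower, hupper⟩ := hFG x hx
    constructor <;> nlinarith [hF0 x hx, mul_nonneg hε.le (hF0 x hx)]
  refine ⟨fun x => (1 - ε) * G x + ε * saturatedSum x,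
    (contDiffOn_const.mul hGsmooth).add (contDiff_const.mul contDiff_saturatedSum).contDiffOn,
    fun x hx σ => by simp only [hGperm x hx, saturatedSum_comp_perm], hbounds,
    (hGconc.smul hε0.le).add ((concaveOn_saturatedSum.subset (subset_univ S) hFconc.1).smul hε.le),
    fun x hx i => ?_, fun x hmem hF => ?_⟩
  · have hG := (hGsmooth.contDiffAt (hopen.mem_nhds hx)).differentiableAt (by simp)
    have hsat := contDiff_saturatedSum.differentiable (by simp) x
    rw [fderiv_fun_add (hG.const_mul _) (hsat.const_mul _), fderiv_const_mul hG,
      fderiv_const_mul hsat]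
    have hGnonneg := fderiv_nonneg_of_monotoneOn hopen hGmono hx
      (Pi.single_nonneg.2 zero_le_one : 0 ≤ Pi.single i (1 : ℝ))
    simp only [add_apply, smul_apply, smul_eq_mul, fderiv_saturatedSum_single]
    positivity
  · exact tendsto_atTop_mono' _ (hmem.mono fun R hR => (hbounds _ hR).1) (hF.const_mul_atTop hε0)

/-- Proposition 3.3 of the paper (smooth regularization of `f_∞`): let `S = Γ_∞ ⊆ ℝⁿ` be an
open convex symmetric cone containing the positive orthant, on which all partial sums
`Σ_{k≠i} λ_k` are positive, and let `F` be concave, symmetric, monotone nondecreasing,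
strictly positive on `S`, with `F(Rλ) → +∞`. Then for every `ε ∈ (0, 1/2)` there is a
function `g` that is `C^∞` on `S`, symmetric, satisfies `(1−ε)F ≤ g ≤ F + (π/2)ε`, is concave
with positive partial derivatives on `S`, and `g(Rλ) → +∞` for every `λ ∈ S`. -/
theorem stmt_16 (n : ℕ) (S : Set (Fin n → ℝ))
    (hopen : IsOpen S) (hconv : Convex ℝ S)
    (hcone : ∀ x ∈ S, ∀ t : ℝ, 0 < t → t • x ∈ S)
    (hperm : ∀ x ∈ S, ∀ σ : Equiv.Perm (Fin n), (fun i => x (σ i)) ∈ S)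
    (horthant : {x : Fin n → ℝ | ∀ i, 0 < x i} ⊆ S)
    (hpos_sum : ∀ x ∈ S, ∀ i : Fin n, 0 < ∑ k ∈ Finset.univ.erase i, x k)
    (F : (Fin n → ℝ) → ℝ)
    (hFconc : ConcaveOn ℝ S F)
    (hFperm : ∀ x ∈ S, ∀ σ : Equiv.Perm (Fin n), F (fun i => x (σ i)) = F x)
    (hFmono : ∀ x ∈ S, ∀ y ∈ S, (∀ i, x i ≤ y i) → F x ≤ F y)
    (hFpos : ∀ x ∈ S, 0 < F x)
    (hFproper : ∀ x ∈ S,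
      Filter.Tendsto (fun R : ℝ => F (R • x)) Filter.atTop Filter.atTop) :
    ∀ ε : ℝ, 0 < ε → ε < 1 / 2 →
      ∃ g : (Fin n → ℝ) → ℝ,
        ContDiffOn ℝ (⊤ : ℕ∞) g S ∧
        (∀ x ∈ S, ∀ σ : Equiv.Perm (Fin n), g (fun i => x (σ i)) = g x) ∧
        (∀ x ∈ S, (1 - ε) * F x ≤ g x ∧ g x ≤ F x + (Real.pi / 2) * ε) ∧
        ConcaveOn ℝ S g ∧
        (∀ x ∈ S, ∀ i : Fin n, 0 < fderiv ℝ g x (Pi.single i 1)) ∧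
        (∀ x ∈ S,
          Filter.Tendsto (fun R : ℝ => g (R • x)) Filter.atTop Filter.atTop) := by
  intro ε hε hε2
  have hsum : ∀ x ∈ S, 0 < ∑ i, x i := fun x hx => by
    obtain ⟨i, -⟩ := Function.ne_iff.1 (ne_zero_of_tendsto_apply_smul_atTop (hFproper x hx))
    have : Nonempty (Fin n) := ⟨i⟩
    exact sum_pos_of_forall_sum_erase_pos (hpos_sum x hx)
  obtain ⟨g, hsmooth, hgperm, hbounds, hconc, hderiv, htendsto⟩ := stmt_16_general hopen
    (isUpperSet_of_convex_cone hopen hconv hcone horthant) hperm hsum hFconc hFperm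
    (fun x hx y hy => hFmono x hx y hy) (fun x hx => (hFpos x hx).le) hε (by linarith)
  refine ⟨g, hsmooth, hgperm, fun x hx => ⟨(hbounds x hx).1, (hbounds x hx).2.trans ?_⟩, hconc,
    hderiv, fun x hx => htendsto x ?_ (hFproper x hx)⟩
  · gcongr
    exact le_mul_of_one_le_left hε.le (by linarith [Real.pi_gt_three])
  · exact (eventually_gt_atTop 0).mono (hcone x hx)
end

section
/- Let u : [0, +∞) → [0, +∞) be a nonincreasing function, and suppose there exist μ > 0, B₀ > 0 and s₀ ≥ 0 such that t·u(s + t) ≤ B₀·u(s)^{1+μ} for every t > 0 and every s ≥ s₀. Then u(s) = 0 for every s ≥ s₀ + 2·B₀·u(s₀)^μ / (1 − 2^{−μ}). -/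
/-!
If `u ≤ a` at `s`, the hypothesis turns into `u ≤ θ * a` at every point from `s + θ⁻¹ * B * a ^ μ`
on. Starting from `a = u s₀` and iterating, `u` is at most `θ ^ n * a` from the `n`-th level on
(`n ≥ 1`), and the gaps `θ⁻¹ * B * a ^ μ * (θ ^ μ) ^ n` between successive levels have a finite sum
because `θ ^ μ < 1`. Hence `u` vanishes from the limit level on. The constant in the theorem is
the one for `θ = 1 / 2`.
-/

open Filter Finset Topology

namespace DeGiorgi

variable {u : ℝ → ℝ} {μ B s₀ a θ : ℝ}

lemma apply_le_mul_of_add_le {s s' : ℝ} (hμ : -1 < μ) (hB : 0 < B) (hθ : 0 < θ)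
    (hiter : ∀ t, 0 < t → t * u (s + t) ≤ B * u s ^ (1 + μ))
    (hu : 0 ≤ u s) (hua : u s ≤ a) (hs' : s + θ⁻¹ * B * a ^ μ ≤ s') :
    u s' ≤ θ * a := by
  have ha : 0 ≤ a := hu.trans hua
  have hgap : B * a ^ μ ≤ θ * (s' - s) := by
    rw [← inv_mul_le_iff₀ hθ]
    linarith
  have hss' : s ≤ s' := le_of_add_le_of_nonneg_left hs' (by positivity)
  obtain rfl | hlt := hss'.eq_or_lt
  · have ha0 : a = 0 := by
      by_contra hne
      have : 0 < B * a ^ μ := mul_pos hB (Real.rpow_pos_of_pos (ha.lt_of_ne' hne) μ)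
      linarith
    simpa [ha0] using hua
  · refine le_of_mul_le_mul_left ?_ (sub_pos.2 hlt)
    calc (s' - s) * u s' ≤ B * u s ^ (1 + μ) := by
          simpa using hiter (s' - s) (sub_pos.2 hlt)
      _ ≤ B * a ^ (1 + μ) := by gcongr; linarith
      _ = B * a ^ μ * a := by rw [Real.rpow_one_add' ha (by linarith)]; ring
      _ ≤ θ * (s' - s) * a := by gcongr
      _ = (s' - s) * (θ * a) := by ring

/-- The `n`-th level of the De Giorgi iteration started at `s₀` with value `a`: the point at
which the bound `a` has been improved to `θ ^ n * a`. -/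
noncomputable def level (μ B s₀ a θ : ℝ) (n : ℕ) : ℝ :=
  s₀ + ∑ k ∈ range n, θ⁻¹ * B * (θ ^ k * a) ^ μ

lemma level_succ (n : ℕ) :
    level μ B s₀ a θ (n + 1) = level μ B s₀ a θ n + θ⁻¹ * B * (θ ^ n * a) ^ μ := by
  simp only [level, sum_range_succ, add_assoc]

lemma le_level (hB : 0 ≤ B) (hθ : 0 ≤ θ) (ha : 0 ≤ a) (n : ℕ) : s₀ ≤ level μ B s₀ a θ n :=
  le_add_of_nonneg_right (sum_nonneg fun _ _ ↦ by positivity)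

lemma hasSum_level_gap (hμ : 0 < μ) (hθ : 0 ≤ θ) (hθ1 : θ < 1) (ha : 0 ≤ a) :
    HasSum (fun k : ℕ ↦ θ⁻¹ * B * (θ ^ k * a) ^ μ) (θ⁻¹ * B * a ^ μ / (1 - θ ^ μ)) := by
  have hgap (k : ℕ) : θ⁻¹ * B * (θ ^ k * a) ^ μ = θ⁻¹ * B * a ^ μ * (θ ^ μ) ^ k := by
    rw [Real.mul_rpow (by positivity) ha, ← Real.rpow_pow_comm hθ]
    ring
  simpa only [hgap, div_eq_mul_inv] using
    (hasSum_geometric_of_lt_one (by positivity) (Real.rpow_lt_one hθ hθ1 hμ)).mul_left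
      (θ⁻¹ * B * a ^ μ)

lemma level_le (hμ : 0 < μ) (hB : 0 ≤ B) (hθ : 0 ≤ θ) (hθ1 : θ < 1) (ha : 0 ≤ a) (n : ℕ) :
    level μ B s₀ a θ n ≤ s₀ + θ⁻¹ * B * a ^ μ / (1 - θ ^ μ) :=
  add_le_add_right
    (sum_le_hasSum _ (fun _ _ ↦ by positivity) (hasSum_level_gap hμ hθ hθ1 ha)) s₀

lemma apply_le_of_level_succ_le (hμ : -1 < μ) (hB : 0 < B) (hθ : 0 < θ)
    (hnonneg : ∀ s, s₀ ≤ s → 0 ≤ u s)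
    (hiter : ∀ t, 0 < t → ∀ s, s₀ ≤ s → t * u (s + t) ≤ B * u s ^ (1 + μ)) {n : ℕ} {s : ℝ}
    (hs : level μ B s₀ (u s₀) θ (n + 1) ≤ s) : u s ≤ θ ^ (n + 1) * u s₀ := by
  have hs₀ (n : ℕ) : s₀ ≤ level μ B s₀ (u s₀) θ n :=
    le_level hB.le hθ.le (hnonneg s₀ le_rfl) n
  have improve (n : ℕ) {s : ℝ} (hu : u (level μ B s₀ (u s₀) θ n) ≤ θ ^ n * u s₀)
      (hs : level μ B s₀ (u s₀) θ (n + 1) ≤ s) : u s ≤ θ ^ (n + 1) * u s₀ := by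
    rw [pow_succ', mul_assoc]
    exact apply_le_mul_of_add_le hμ hB hθ (fun t ht ↦ hiter t ht _ (hs₀ n)) (hnonneg _ (hs₀ n))
      hu ((level_succ n).ge.trans hs)
  induction n generalizing s with
  | zero => exact improve 0 (by simp [level]) hs
  | succ n ih => exact improve (n + 1) (ih le_rfl) hs

end DeGiorgi

open DeGiorgi in
theorem stmt_18_general {u : ℝ → ℝ} {μ B s₀ θ : ℝ} (hμ : 0 < μ) (hB : 0 < B)
    (hθ : 0 < θ) (hθ1 : θ < 1) (hnonneg : ∀ s, s₀ ≤ s → 0 ≤ u s)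
    (hiter : ∀ t, 0 < t → ∀ s, s₀ ≤ s → t * u (s + t) ≤ B * u s ^ (1 + μ)) {s : ℝ}
    (hs : s₀ + θ⁻¹ * B * u s₀ ^ μ / (1 - θ ^ μ) ≤ s) : u s = 0 := by
  have ha : 0 ≤ u s₀ := hnonneg s₀ le_rfl
  have hlevel (n : ℕ) : level μ B s₀ (u s₀) θ n ≤ s :=
    (level_le hμ hB.le hθ.le hθ1 ha n).trans hs
  have hdecay (n : ℕ) : u s ≤ θ ^ (n + 1) * u s₀ :=
    apply_le_of_level_succ_le (by linarith) hB hθ hnonneg hiter (hlevel (n + 1))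
  have hlim : Tendsto (fun n : ℕ ↦ θ ^ (n + 1) * u s₀) atTop (𝓝 0) := by
    simpa only [zero_mul, Function.comp_def] using
      ((tendsto_pow_atTop_nhds_zero_of_lt_one hθ.le hθ1).comp (tendsto_add_atTop_nat 1)).mul_const
        (u s₀)
  exact le_antisymm (ge_of_tendsto' hlim hdecay)
    (hnonneg s ((le_level hB.le hθ.le ha 0).trans (hlevel 0)))

/-- Lemma 4.6 of the paper (De Giorgi's iteration lemma): if `u : [0,∞) → [0,∞)` is
nonincreasing and `t·u(s+t) ≤ B₀·u(s)^{1+μ}` for all `t > 0` and `s ≥ s₀`, then `u ≡ 0` on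
`[s₀ + 2B₀·u(s₀)^μ/(1 − 2^{−μ}), ∞)`. -/
theorem stmt_18 (u : ℝ → ℝ)
    (hnonneg : ∀ s : ℝ, 0 ≤ s → 0 ≤ u s)
    (hmono : ∀ s t : ℝ, 0 ≤ s → s ≤ t → u t ≤ u s)
    (μ B₀ s₀ : ℝ) (hμ : 0 < μ) (hB₀ : 0 < B₀) (hs₀ : 0 ≤ s₀)
    (hiter : ∀ t : ℝ, 0 < t → ∀ s : ℝ, s₀ ≤ s → t * u (s + t) ≤ B₀ * u s ^ (1 + μ)) :
    ∀ s : ℝ, s₀ + 2 * B₀ * u s₀ ^ μ / (1 - 2 ^ (-μ)) ≤ s → u s = 0 := by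
  intro s hs
  exact stmt_18_general (θ := 2⁻¹) hμ hB₀ (by norm_num) (by norm_num)
    (fun s hs ↦ hnonneg s (hs₀.trans hs)) hiter (by simpa [Real.rpow_neg_eq_inv_rpow] using hs)
end
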